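/- arXiv:1510.07888 — 6 statements merged into one kernel-verified Lean document; each statement's English description precedes it below -/
import Mathlib

section
/- Let total endowments X, Y > 0 of goods 1 and 2 be split between trader A, endowed with (s1, s2), and trader C, endowed with (X−s1, Y−s2), where 0 ≤ s1 ≤ X and 0 ≤ s2 ≤ Y. Let F = (f1, f2) satisfy 0 < f1 < X and 0 < f2 < Y, and set g = √(f2/f1) and h = √((Y−f2)/(X−f1)). Suppose the purchase-tax rate r > 0 satisfies h = (1+r)²·g, that s1 > f1 and s2 < f2, and that (f2 − s2)/(s1 − f1) = √(g·h). Then for any token endowment n > 0, the prices p = n/(r·(s1 − f1)) and q = n/(r·(f2 − s2)) satisfy p/q = √(g·h), the bundle (f1, f2) maximizes u(x,y) = √x + √y over A's budget set B(p,q,r,n,s1,s2), and the bundle (X−f1, Y−f2) maximizes u over C's budget set B(p,q,r,n,X−s1,Y−s2); hence these prices and this allocation form a market equilibrium (both traders optimize and both goods markets clear). -/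
/-- Utility function u(x,y) = √x + √y. -/
noncomputable def u (x y : ℝ) : ℝ := Real.sqrt x + Real.sqrt y

/-- Budget set of a trader with endowment (s,t), n tokens, prices p,q,
purchase-tax rate r: constraints D, E, F together with nonnegativity. -/
def B (p q r n s t : ℝ) : Set (ℝ × ℝ) :=
  {xy | 0 ≤ xy.1 ∧ 0 ≤ xy.2 ∧
    p * (xy.1 - s) + (1 + r) * q * (xy.2 - t) ≤ n ∧
    (1 + r) * p * (xy.1 - s) + (1 + r) * q * (xy.2 - t) ≤ n ∧
    (1 + r) * p * (xy.1 - s) + q * (xy.2 - t) ≤ n}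

theorem opt_aux (f1 f2 α β x y : ℝ) (hf1 : 0 < f1) (hf2 : 0 < f2) (hα : 0 < α)
    (hab : α = β * Real.sqrt (f2 / f1)) (hx : 0 ≤ x) (hy : 0 ≤ y)
    (hle : α * (x - f1) + β * (y - f2) ≤ 0) : u x y ≤ u f1 f2 := by
  unfold u
  have ha : 0 < Real.sqrt f1 := Real.sqrt_pos.2 hf1
  have hb : 0 < Real.sqrt f2 := Real.sqrt_pos.2 hf2
  rw [Real.sqrt_div hf2.le] at hab
  have e1 := Real.sq_sqrt hf1.le
  have e2 := Real.sq_sqrt hf2.le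
  have e3 := Real.sq_sqrt hx
  have e4 := Real.sq_sqrt hy
  generalize Real.sqrt f1 = a at *
  generalize Real.sqrt f2 = b at *
  generalize Real.sqrt x = v at *
  generalize Real.sqrt y = w at *
  subst e1 e2 e3 e4
  have hab' : α * a = β * b := by rw [hab]; field_simp
  have hβ : 0 < β := by
    by_contra hc
    nlinarith [mul_pos hα ha]
  have h1 := mul_nonneg hα.le (sq_nonneg (v - a))
  have h2 := mul_nonneg hβ.le (sq_nonneg (w - b))
  have h3 : (α * a) * (v - a) + (β * b) * (w - b) ≤ 0 := by nlinarith
  rw [← hab'] at h3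
  have h4 : 0 < α * a := mul_pos hα ha
  by_contra hc
  push Not at hc
  nlinarith [mul_pos h4 (sub_pos.2 hc)]

/-- Edgeworth-box equilibrium theorem: under the tangency-ratio and slope
conditions, the prices p = n/(r(s₁−f₁)), q = n/(r(f₂−s₂)) together with the
allocation F = (f₁,f₂) to A and (X−f₁, Y−f₂) to C form a market equilibrium:
p/q = √(gh), and each trader's bundle maximizes utility over their budget set
(the goods markets clear since the bundles sum to the total endowments). -/
theorem edgeworth_equilibrium
    (X Y s1 s2 f1 f2 g h r n p q : ℝ)
    (hX : 0 < X) (hY : 0 < Y)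
    (hs1 : 0 ≤ s1) (hs1X : s1 ≤ X) (hs2 : 0 ≤ s2) (hs2Y : s2 ≤ Y)
    (hf1 : 0 < f1) (hf1X : f1 < X) (hf2 : 0 < f2) (hf2Y : f2 < Y)
    (hg : g = Real.sqrt (f2 / f1))
    (hh : h = Real.sqrt ((Y - f2) / (X - f1)))
    (hr : 0 < r)
    (hgh : h = (1 + r) ^ 2 * g)
    (hAs1 : f1 < s1) (hAs2 : s2 < f2)
    (hslope : (f2 - s2) / (s1 - f1) = Real.sqrt (g * h))
    (hn : 0 < n)
    (hp : p = n / (r * (s1 - f1)))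
    (hq : q = n / (r * (f2 - s2))) :
    p / q = Real.sqrt (g * h) ∧
    ((f1, f2) ∈ B p q r n s1 s2 ∧
      ∀ xy ∈ B p q r n s1 s2, u xy.1 xy.2 ≤ u f1 f2) ∧
    ((X - f1, Y - f2) ∈ B p q r n (X - s1) (Y - s2) ∧
      ∀ xy ∈ B p q r n (X - s1) (Y - s2), u xy.1 xy.2 ≤ u (X - f1) (Y - f2)) := by
  have ha : 0 < s1 - f1 := by linarith
  have hb : 0 < f2 - s2 := by linarith
  have hp0 : 0 < p := by rw [hp]; positivity
  have hq0 : 0 < q := by rw [hq]; positivity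
  have hpa : r * (p * (s1 - f1)) = n := by rw [hp]; field_simp
  have hqb : r * (q * (f2 - s2)) = n := by rw [hq]; field_simp
  have hg0 : 0 ≤ g := by rw [hg]; exact Real.sqrt_nonneg _
  have hsq : Real.sqrt (g * h) = (1 + r) * g := by
    rw [hgh, show g * ((1 + r) ^ 2 * g) = ((1 + r) * g) ^ 2 by ring]
    exact Real.sqrt_sq (by positivity)
  have heq : p * (s1 - f1) = q * (f2 - s2) :=
    mul_left_cancel₀ hr.ne' (hpa.trans hqb.symm)
  have hpq : p / q = Real.sqrt (g * h) := by
    rw [← hslope, div_eq_div_iff hq0.ne' ha.ne']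
    linarith
  have hpq' : p = (1 + r) * g * q := by
    rw [hsq, div_eq_iff hq0.ne'] at hpq
    exact hpq
  have hpos : 0 < p * (s1 - f1) := mul_pos hp0 ha
  refine ⟨hpq, ⟨⟨hf1.le, hf2.le, ?_, ?_, ?_⟩, ?_⟩, ⟨⟨?_, ?_, ?_, ?_, ?_⟩, ?_⟩⟩
  · dsimp only; linarith
  · dsimp only; linarith
  · dsimp only; linarith
  · rintro ⟨x, y⟩ ⟨hx, hy, hD, -, -⟩
    dsimp only at *
    refine opt_aux f1 f2 p ((1 + r) * q) x y hf1 hf2 hp0 ?_ hx hy ?_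
    · rw [← hg, hpq']; ring
    · linarith
  · dsimp only; linarith
  · dsimp only; linarith
  · dsimp only; linarith
  · dsimp only; linarith
  · dsimp only; linarith
  · rintro ⟨x, y⟩ ⟨hx, hy, -, -, hF⟩
    dsimp only at *
    refine opt_aux (X - f1) (Y - f2) ((1 + r) * p) q x y (by linarith) (by linarith)
      (by positivity) ?_ hx hy ?_
    · rw [← hh, hgh, hpq']; ring
    · linarith
end

section
/- Let p, q > 0, r ≥ 0, n ≥ 0, and let (s,t) ∈ ℝ≥0² be a trader's endowment. Suppose F = (f1, f2) with f1, f2 > 0 satisfies: f2 = (p/((1+r)q))²·f1 (tangency to constraint D); p(f1 − s) + (1+r)q(f2 − t) = n (constraint D binds); f1 ≤ s; and q(f2 − t) ≥ n/(1+r). Then F lies in the budget set B(p,q,r,n,s,t) and maximizes u(x,y) = √x + √y over B(p,q,r,n,s,t). -/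
/-- If F = (f₁,f₂) is tangent to constraint D, constraint D binds, f₁ ≤ s and
q(f₂−t) ≥ n/(1+r), then F lies in the budget set and maximizes u over it. -/
theorem optimal_on_constraint_D
    (p q r n s t f1 f2 : ℝ)
    (hp : 0 < p) (hq : 0 < q) (hr : 0 ≤ r) (hn : 0 ≤ n)
    (hs : 0 ≤ s) (ht : 0 ≤ t)
    (hf1 : 0 < f1) (hf2 : 0 < f2)
    (htan : f2 = (p / ((1 + r) * q)) ^ 2 * f1)
    (hbind : p * (f1 - s) + (1 + r) * q * (f2 - t) = n)
    (hle : f1 ≤ s)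
    (hbuy : q * (f2 - t) ≥ n / (1 + r)) :
    (f1, f2) ∈ B p q r n s t ∧
    ∀ xy ∈ B p q r n s t, u xy.1 xy.2 ≤ u f1 f2 := by
  have h1r : 0 < 1 + r := by linarith
  have hb : 0 ≤ q * (f2 - t) := le_trans (div_nonneg hn h1r.le) hbuy
  have ha : p * (f1 - s) ≤ 0 := mul_nonpos_of_nonneg_of_nonpos hp.le (by linarith)
  have hra := mul_nonneg hr (neg_nonneg.mpr ha)
  have hrb := mul_nonneg hr hb
  refine ⟨⟨hf1.le, hf2.le, hbind.le, ?_, ?_⟩, ?_⟩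
  · dsimp only
    nlinarith
  · dsimp only
    nlinarith
  rintro ⟨x, y⟩ ⟨hx, hy, hD, -, -⟩
  dsimp only at hx hy hD ⊢
  unfold u
  obtain ⟨w, hw⟩ : ∃ w, w = (1 + r) * q := ⟨_, rfl⟩
  have hw0 : 0 < w := by rw [hw]; positivity
  rw [← hw] at htan hbind hD
  obtain ⟨k, hk⟩ : ∃ k, k = p / w := ⟨_, rfl⟩
  have hk0 : 0 < k := by rw [hk]; positivity
  have hpk : p = k * w := by rw [hk]; field_simp
  rw [← hk] at htan
  have hsf : √f2 = k * √f1 := by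
    rw [htan, Real.sqrt_mul (sq_nonneg k), Real.sqrt_sq hk0.le]
  rw [hsf]
  have e1 := Real.sq_sqrt hx
  have e2 := Real.sq_sqrt hy
  have e3 := Real.sq_sqrt hf1.le
  have hg := Real.sqrt_nonneg f1
  generalize √x = a at *
  generalize √y = b at *
  generalize √f1 = g at *
  have h1 : k * a ^ 2 + b ^ 2 ≤ k * (1 + k) * g ^ 2 := by
    have : w * (k * x + y) ≤ w * (k * f1 + f2) := by
      rw [hpk] at hD hbind
      linarith
    have := le_of_mul_le_mul_left this hw0
    rw [e1, e2, e3]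
    rw [htan] at this
    linarith
  have h2 : k * (a + b) ^ 2 ≤ k * (g + k * g) ^ 2 := by
    have := mul_le_mul_of_nonneg_left h1 (by linarith : 0 ≤ 1 + k)
    linarith [sq_nonneg (k * a - b)]
  exact le_trans (le_abs_self _) (abs_le_of_sq_le_sq (le_of_mul_le_mul_left h2 hk0) (by positivity))
end

section
/- Let p, q > 0, r ≥ 0, n ≥ 0, and let (s,t) ∈ ℝ≥0² be a trader's endowment. Suppose F = (f1, f2) with f1, f2 > 0 satisfies: f2 = ((1+r)p/q)²·f1 (tangency to constraint F); (1+r)p(f1 − s) + q(f2 − t) = n (constraint F binds); f2 ≤ t; and p(f1 − s) ≥ n/(1+r). Then F lies in the budget set B(p,q,r,n,s,t) and maximizes u(x,y) = √x + √y over B(p,q,r,n,s,t). -/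
/-- If F = (f₁,f₂) is tangent to constraint F, constraint F binds, f₂ ≤ t and
p(f₁−s) ≥ n/(1+r), then F lies in the budget set and maximizes u over it. -/
theorem optimal_on_constraint_F
    (p q r n s t f1 f2 : ℝ)
    (hp : 0 < p) (hq : 0 < q) (hr : 0 ≤ r) (hn : 0 ≤ n)
    (hs : 0 ≤ s) (ht : 0 ≤ t)
    (hf1 : 0 < f1) (hf2 : 0 < f2)
    (htan : f2 = ((1 + r) * p / q) ^ 2 * f1)
    (hbind : (1 + r) * p * (f1 - s) + q * (f2 - t) = n)
    (hle : f2 ≤ t)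
    (hbuy : p * (f1 - s) ≥ n / (1 + r)) :
    (f1, f2) ∈ B p q r n s t ∧
    ∀ xy ∈ B p q r n s t, u xy.1 xy.2 ≤ u f1 f2 := by
  have h1r : 0 < 1 + r := by linarith
  have hpos : 0 ≤ p * (f1 - s) := le_trans (div_nonneg hn h1r.le) hbuy
  have hA : 0 ≤ r * (p * (f1 - s)) := mul_nonneg hr hpos
  have hC : 0 ≤ r * (q * (t - f2)) := mul_nonneg hr (mul_nonneg hq.le (by linarith))
  refine ⟨⟨hf1.le, hf2.le, ?_, ?_, ?_⟩, ?_⟩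
  · show p * (f1 - s) + (1 + r) * q * (f2 - t) ≤ n
    nlinarith
  · show (1 + r) * p * (f1 - s) + (1 + r) * q * (f2 - t) ≤ n
    nlinarith
  · exact hbind.le
  · rintro ⟨x, y⟩ ⟨hx, hy, -, -, hF⟩
    simp only [u] at *
    obtain ⟨k, hk⟩ : ∃ k, k = (1 + r) * p / q := ⟨_, rfl⟩
    have hk0 : 0 < k := by rw [hk]; positivity
    have hkq : (1 + r) * p = k * q := by rw [hk]; field_simp
    rw [← hk] at htan
    have ha := Real.sqrt_pos.2 hf1
    have hb : √f2 = k * √f1 := by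
      rw [htan, Real.sqrt_mul (by positivity), Real.sqrt_sq hk0.le]
    rw [hb]
    have ea := Real.sq_sqrt hf1.le
    have ex := Real.sq_sqrt hx
    have ey := Real.sq_sqrt hy
    rw [hkq] at hF hbind
    have h3 : k * x + y ≤ k * f1 + f2 := by
      have : q * (k * x + y) ≤ q * (k * f1 + f2) := by linarith
      exact le_of_mul_le_mul_left this hq
    rw [htan, ← ea, ← ex, ← ey] at h3
    generalize √f1 = a at *
    generalize √x = X at *
    generalize √y = Y at *
    have hka : 0 < 2 * (k * a) := by positivity
    refine le_of_mul_le_mul_left ?_ hka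
    have h4 := mul_nonneg hk0.le (sq_nonneg (X - a))
    have h5 := sq_nonneg (Y - k * a)
    linarith
end

section
/- Let r ≥ 0, n > 0, s ≥ 0, and let the two goods have equal prices p = q > 0. For a trader with endowment (s, s) and n tokens, the unique maximizer of u(x,y) = √x + √y over the budget set B(p,p,r,n,s,s) is the symmetric bundle (s + n/(2p(1+r)), s + n/(2p(1+r))); in particular the trader's optimal final holding of each good strictly exceeds their endowment of that good. -/
/-- A trader on the diagonal facing equal prices p = q optimally buys equal
extra amounts n/(2p(1+r)) of both goods: the symmetric bundle is the unique
maximizer of u over the budget set, and it strictly exceeds the endowment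
in each good. -/
theorem diagonal_trader_demand (p r n s : ℝ)
    (hp : 0 < p) (hr : 0 ≤ r) (hn : 0 < n) (hs : 0 ≤ s) :
    (s + n / (2 * p * (1 + r)), s + n / (2 * p * (1 + r))) ∈ B p p r n s s ∧
    (∀ xy ∈ B p p r n s s,
      u xy.1 xy.2 ≤ u (s + n / (2 * p * (1 + r))) (s + n / (2 * p * (1 + r)))) ∧
    (∀ xy ∈ B p p r n s s,
      (∀ zw ∈ B p p r n s s, u zw.1 zw.2 ≤ u xy.1 xy.2) →
      xy = (s + n / (2 * p * (1 + r)), s + n / (2 * p * (1 + r)))) ∧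
    s < s + n / (2 * p * (1 + r)) := by
  have hr1 : 0 < 1 + r := by linarith
  obtain ⟨d, hd⟩ : ∃ d, d = n / (2 * p * (1 + r)) := ⟨_, rfl⟩
  have hdpos : 0 < d := by rw [hd]; positivity
  have hnd : n = 2 * p * (1 + r) * d := by rw [hd]; field_simp
  rw [← hd]
  have hprd : 0 ≤ p * r * d := by positivity
  have hmem : (s + d, s + d) ∈ B p p r n s s := by
    refine ⟨?_, ?_, ?_, ?_, ?_⟩ <;> simp only [] <;> nlinarith
  have hsum : ∀ xy ∈ B p p r n s s, xy.1 + xy.2 ≤ 2 * (s + d) := by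
    rintro ⟨x, y⟩ ⟨_, _, _, h, _⟩
    simp only [] at h ⊢
    have hk : 0 < (1 + r) * p := by positivity
    have : ((1 + r) * p) * (x + y) ≤ ((1 + r) * p) * (2 * (s + d)) := by
      rw [hnd] at h; linarith
    exact le_of_mul_le_mul_left this hk
  have he := Real.sq_sqrt (show 0 ≤ s + d by linarith)
  have he0 := Real.sqrt_nonneg (s + d)
  refine ⟨hmem, ?_, ?_, by linarith⟩
  · rintro ⟨x, y⟩ h
    have h1 := hsum _ h
    obtain ⟨hx, hy, -⟩ := h
    simp only [u] at *
    have ha := Real.sq_sqrt hx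
    have hb := Real.sq_sqrt hy
    refine le_of_abs_le (abs_le_of_sq_le_sq ?_ (by linarith))
    nlinarith [sq_nonneg (√x - √y)]
  · rintro ⟨x, y⟩ h hmax
    have h1 := hsum _ h
    have h2 := hmax _ hmem
    obtain ⟨hx, hy, -⟩ := h
    simp only [u] at *
    have ha := Real.sq_sqrt hx
    have hb := Real.sq_sqrt hy
    have h3 : (√(s + d) + √(s + d)) ^ 2 ≤ (√x + √y) ^ 2 :=
      pow_le_pow_left₀ (by linarith) h2 2
    have h4 : √x - √y = 0 := by
      apply pow_eq_zero_iff (two_ne_zero) |>.1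
      nlinarith [sq_nonneg (√x - √y)]
    have h5 : √x = √y := by linarith
    have h6 : x = y := by rw [← ha, ← hb, h5]
    subst h6
    have h7 : x = s + d := by nlinarith
    rw [h7]
end

section
/- Let r ≥ 0 and n > 0, and consider two traders with endowments (a, a) and (c, c) on the diagonal (a, c ≥ 0, a + c > 0), each given n tokens, with common utility u(x,y) = √x + √y. Then for every common price level p = q > 0, the sum of the two traders' unique optimal demands for good 1 equals a + c + n/(p(1+r)), which strictly exceeds the total endowment a + c of good 1; hence no market-clearing equilibrium with equal prices p = q exists. -/
theorem demand_aux (p r n s : ℝ) (hp : 0 < p) (hr : 0 ≤ r) (hn : 0 < n) (hs : 0 ≤ s)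
    (x : ℝ × ℝ) (hx : x ∈ B p p r n s s)
    (hm : ∀ zw ∈ B p p r n s s, u zw.1 zw.2 ≤ u x.1 x.2) :
    x.1 = s + n / (p * (1 + r)) / 2 := by
  have h1r : 0 < 1 + r := by linarith
  have hpr : 0 < p * (1 + r) := mul_pos hp h1r
  obtain ⟨m, hmdef⟩ : ∃ m, m = n / (p * (1 + r)) := ⟨_, rfl⟩
  rw [← hmdef]
  have hmn : m * (p * (1 + r)) = n := by rw [hmdef]; field_simp
  have hmpos : 0 < m := by rw [hmdef]; positivity
  have hrpm : 0 ≤ r * (p * m) := by positivity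
  have hpm : 0 < p * m := by positivity
  have hk := hm (s + m / 2, s + m / 2) (by
    simp only [B, Set.mem_setOf_eq]
    refine ⟨by linarith, by linarith, ?_, ?_, ?_⟩ <;> nlinarith)
  obtain ⟨h1, h2, -, hE, -⟩ := hx
  have hsum : x.1 + x.2 ≤ 2 * (s + m / 2) := by
    have : (p * (1 + r)) * (x.1 + x.2 - 2 * s) ≤ (p * (1 + r)) * m := by linarith
    have := le_of_mul_le_mul_left this hpr
    linarith
  simp only [u] at hk
  have e1 := Real.sq_sqrt h1
  have e2 := Real.sq_sqrt h2
  have hk0 : 0 ≤ s + m / 2 := by linarith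
  have e3 := Real.sq_sqrt hk0
  have n1 := Real.sqrt_nonneg x.1
  have n2 := Real.sqrt_nonneg x.2
  have n3 := Real.sqrt_nonneg (s + m / 2)
  generalize √x.1 = α at *
  generalize √x.2 = β at *
  generalize √(s + m / 2) = κ at *
  have hab : (α - β) ^ 2 = 0 := by
    apply le_antisymm _ (sq_nonneg _)
    nlinarith [mul_self_le_mul_self (by linarith : 0 ≤ κ + κ) hk]
  have hab' : α = β := by
    have := pow_eq_zero_iff (two_ne_zero) |>.1 hab
    linarith
  subst hab'
  have : κ ≤ α := by linarith
  nlinarith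

/-- With two traders endowed on the diagonal, at every common price level
p = q the sum of their optimal demands for good 1 equals
a + c + n/(p(1+r)) > a + c, so no market-clearing equilibrium with equal
prices exists. -/
theorem no_equilibrium_on_diagonal (r n a c : ℝ)
    (hr : 0 ≤ r) (hn : 0 < n) (ha : 0 ≤ a) (hc : 0 ≤ c) (hac : 0 < a + c) :
    (∀ p : ℝ, 0 < p →
      ∀ xa ∈ B p p r n a a, (∀ zw ∈ B p p r n a a, u zw.1 zw.2 ≤ u xa.1 xa.2) →
      ∀ xc ∈ B p p r n c c, (∀ zw ∈ B p p r n c c, u zw.1 zw.2 ≤ u xc.1 xc.2) →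
        xa.1 + xc.1 = a + c + n / (p * (1 + r)) ∧ a + c < xa.1 + xc.1) ∧
    ¬ ∃ p : ℝ, 0 < p ∧
      ∃ xa ∈ B p p r n a a, (∀ zw ∈ B p p r n a a, u zw.1 zw.2 ≤ u xa.1 xa.2) ∧
      ∃ xc ∈ B p p r n c c, (∀ zw ∈ B p p r n c c, u zw.1 zw.2 ≤ u xc.1 xc.2) ∧
        xa.1 + xc.1 = a + c ∧ xa.2 + xc.2 = a + c := by
  have key : ∀ p : ℝ, 0 < p →
      ∀ xa ∈ B p p r n a a, (∀ zw ∈ B p p r n a a, u zw.1 zw.2 ≤ u xa.1 xa.2) →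
      ∀ xc ∈ B p p r n c c, (∀ zw ∈ B p p r n c c, u zw.1 zw.2 ≤ u xc.1 xc.2) →
        xa.1 + xc.1 = a + c + n / (p * (1 + r)) ∧ a + c < xa.1 + xc.1 := by
    intro p hp xa hxa hma xc hxc hmc
    have h1 := demand_aux p r n a hp hr hn ha xa hxa hma
    have h2 := demand_aux p r n c hp hr hn hc xc hxc hmc
    have h3 : 0 < n / (p * (1 + r)) := by positivity
    constructor <;> linarith
  refine ⟨key, ?_⟩
  rintro ⟨p, hp, xa, hxa, hma, xc, hxc, hmc, e, -⟩
  have := (key p hp xa hxa hma xc hxc hmc).2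
  linarith
end

section
/- (Mirror of the Edgeworth-box equilibrium theorem, for the second revised contract curve.) Let total endowments X, Y > 0 be split between trader A, endowed with (s1, s2), and trader C, endowed with (X−s1, Y−s2), where 0 ≤ s1 ≤ X and 0 ≤ s2 ≤ Y. Let F = (f1, f2) satisfy 0 < f1 < X and 0 < f2 < Y, and set g = √(f2/f1) and h = √((Y−f2)/(X−f1)). Suppose r > 0 satisfies h = g/(1+r)², that s1 < f1 and s2 > f2, and that (s2 − f2)/(f1 − s1) = √(g·h). Then for any n > 0, the prices p = n/(r·(f1 − s1)) and q = n/(r·(s2 − f2)) satisfy p/q = √(g·h), the bundle (f1, f2) maximizes u(x,y) = √x + √y over B(p,q,r,n,s1,s2), and (X−f1, Y−f2) maximizes u over B(p,q,r,n,X−s1,Y−s2), so these prices and this allocation form a market equilibrium in which trader A buys good 1 and sells good 2. -/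
theorem util_max_aux (P Q x0 y0 x y : ℝ) (hP : 0 < P) (hQ : 0 < Q) (hx0 : 0 < x0) (hy0 : 0 < y0)
    (hx : 0 ≤ x) (hy : 0 ≤ y) (hm : Real.sqrt (y0 / x0) = P / Q)
    (hb : P * (x - x0) + Q * (y - y0) ≤ 0) : u x y ≤ u x0 y0 := by
  unfold u
  rw [Real.sqrt_div hy0.le] at hm
  have ha := Real.sqrt_pos.2 hx0
  have hb0 := Real.sqrt_pos.2 hy0
  have e1 := Real.sq_sqrt hx0.le
  have e2 := Real.sq_sqrt hy0.le
  have e3 := Real.sq_sqrt hx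
  have e4 := Real.sq_sqrt hy
  generalize Real.sqrt x0 = a at *
  generalize Real.sqrt y0 = b at *
  generalize Real.sqrt x = c at *
  generalize Real.sqrt y = d at *
  rw [div_eq_div_iff ha.ne' hQ.ne'] at hm
  have h1 : b * (x - x0) + a * (y - y0) ≤ 0 := by
    have : P * (b * (x - x0) + a * (y - y0)) = b * (P * (x - x0) + Q * (y - y0)) := by
      linear_combination (-(y - y0)) * hm
    have h2 : P * (b * (x - x0) + a * (y - y0)) ≤ 0 := by
      rw [this]; exact mul_nonpos_of_nonneg_of_nonpos hb0.le hb
    by_contra hc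
    push Not at hc
    linarith [mul_pos hP hc]
  have h3 : (2 * a * b) * (c + d - a - b) ≤ 0 := by
    subst e1 e2 e3 e4
    nlinarith [mul_nonneg hb0.le (sq_nonneg (c - a)), mul_nonneg ha.le (sq_nonneg (d - b))]
  by_contra hc
  push Not at hc
  have : 0 < (2 * a * b) * (c + d - a - b) := by
    apply mul_pos (by positivity); linarith
  linarith

/-- Mirror of the Edgeworth-box equilibrium theorem, for the second revised
contract curve (h = g/(1+r)², trader A buys good 1 and sells good 2): the
prices p = n/(r(f₁−s₁)) and q = n/(r(s₂−f₂)) with the allocation F form a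
market equilibrium. -/
theorem edgeworth_equilibrium_mirror
    (X Y s1 s2 f1 f2 g h r n p q : ℝ)
    (hX : 0 < X) (hY : 0 < Y)
    (hs1 : 0 ≤ s1) (hs1X : s1 ≤ X) (hs2 : 0 ≤ s2) (hs2Y : s2 ≤ Y)
    (hf1 : 0 < f1) (hf1X : f1 < X) (hf2 : 0 < f2) (hf2Y : f2 < Y)
    (hg : g = Real.sqrt (f2 / f1))
    (hh : h = Real.sqrt ((Y - f2) / (X - f1)))
    (hr : 0 < r)
    (hgh : h = g / (1 + r) ^ 2)
    (hAs1 : s1 < f1) (hAs2 : f2 < s2)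
    (hslope : (s2 - f2) / (f1 - s1) = Real.sqrt (g * h))
    (hn : 0 < n)
    (hp : p = n / (r * (f1 - s1)))
    (hq : q = n / (r * (s2 - f2))) :
    p / q = Real.sqrt (g * h) ∧
    ((f1, f2) ∈ B p q r n s1 s2 ∧
      ∀ xy ∈ B p q r n s1 s2, u xy.1 xy.2 ≤ u f1 f2) ∧
    ((X - f1, Y - f2) ∈ B p q r n (X - s1) (Y - s2) ∧
      ∀ xy ∈ B p q r n (X - s1) (Y - s2), u xy.1 xy.2 ≤ u (X - f1) (Y - f2)) := by
  have hr1 : 0 < 1 + r := by linarith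
  have ha : 0 < f1 - s1 := by linarith
  have hb : 0 < s2 - f2 := by linarith
  have hg0 : 0 < g := by rw [hg]; exact Real.sqrt_pos.2 (by positivity)
  have hp0 : 0 < p := by rw [hp]; positivity
  have hq0 : 0 < q := by rw [hq]; positivity
  have hs : Real.sqrt (g * h) = g / (1 + r) := by
    rw [show g * h = (g / (1 + r)) ^ 2 by rw [hgh]; field_simp]
    exact Real.sqrt_sq (by positivity)
  have hpq : p / q = Real.sqrt (g * h) := by
    rw [← hslope, hp, hq]; field_simp
  have hpa : r * (p * (f1 - s1)) = n := by rw [hp]; field_simp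
  have hqb : r * (q * (s2 - f2)) = n := by rw [hq]; field_simp
  have heq : p * (f1 - s1) = q * (s2 - f2) := by
    apply mul_left_cancel₀ hr.ne'; linarith
  refine ⟨hpq, ⟨⟨hf1.le, hf2.le, ?_, ?_, ?_⟩, ?_⟩, ⟨⟨?_, ?_, ?_, ?_, ?_⟩, ?_⟩⟩
  · dsimp only; nlinarith
  · dsimp only; nlinarith
  · dsimp only; nlinarith
  · rintro ⟨x, y⟩ ⟨hx, hy, h1, h2, h3⟩
    dsimp only at *
    refine util_max_aux ((1 + r) * p) q _ _ _ _ (by positivity) hq0 hf1 hf2 hx hy ?_ ?_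
    · rw [← hg, mul_div_assoc, hpq, hs]; field_simp
    · linarith
  · dsimp only; linarith
  · dsimp only; linarith
  · dsimp only; nlinarith
  · dsimp only; nlinarith
  · dsimp only; nlinarith
  · rintro ⟨x, y⟩ ⟨hx, hy, h1, h2, h3⟩
    dsimp only at *
    refine util_max_aux p ((1 + r) * q) _ _ _ _ hp0 (by positivity) (by linarith) (by linarith)
      hx hy ?_ ?_
    · rw [← hh, mul_comm, ← div_div, hpq, hs, hgh]; field_simp
    · linarith
end
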